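/- arXiv:1904.01887 — 7 statements merged into one kernel-verified Lean document; each statement's English description precedes it below -/
import Mathlib

section
/- Let p ≥ 1, 0 < q < 1, and m ≥ 1. Then for every vector u ∈ ℝ^m, the limit inferior, as z → 0 with z ≠ 0, of the quotient (‖z‖_p^q − ⟨u, z⟩)/‖z‖_2 is nonnegative. Equivalently, every u ∈ ℝ^m is a regular (Fréchet) subgradient of the function z ↦ ‖z‖_p^q at the origin, so the regular subdifferential of ‖·‖_p^q at 0 is all of ℝ^m. -/
open Topology Filter

/-- Each coordinate is bounded by the `ℓ^p` norm. -/
lemma abs_le_sum_rpow_rpow_inv {ι : Type*} [Fintype ι] {p : ℝ} (hp : 0 < p) (z : ι → ℝ) (i : ι) :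
    |z i| ≤ (∑ j, |z j| ^ p) ^ (1 / p) := by
  have h : |z i| ^ p ≤ ∑ j, |z j| ^ p :=
    Finset.single_le_sum (f := fun j => |z j| ^ p) (fun j _ => by positivity) (Finset.mem_univ i)
  calc |z i| = (|z i| ^ p) ^ (1 / p) := by
        rw [one_div, Real.rpow_rpow_inv (abs_nonneg _) hp.ne']
    _ ≤ _ := Real.rpow_le_rpow (by positivity) h (by positivity)

/-- A linear pairing is bounded by the `ℓ^1` norm of one factor times the `ℓ^p` norm of the
other. -/
lemma sum_mul_le_sum_abs_mul_sum_rpow {ι : Type*} [Fintype ι] {p : ℝ} (hp : 0 < p)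
    (u z : ι → ℝ) :
    ∑ i, u i * z i ≤ (∑ i, |u i|) * (∑ j, |z j| ^ p) ^ (1 / p) := by
  rw [Finset.sum_mul]
  refine Finset.sum_le_sum fun i _ => (le_abs_self _).trans ?_
  rw [abs_mul]
  exact mul_le_mul_of_nonneg_left (abs_le_sum_rpow_rpow_inv hp z i) (abs_nonneg _)

/-- Every `u ∈ ℝ^m` is a regular (Fréchet) subgradient of `z ↦ ‖z‖_p^q` at the origin:
the liminf as `z → 0`, `z ≠ 0`, of `(‖z‖_p^q − ⟨u, z⟩)/‖z‖₂` is nonnegative, i.e.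
for every `ε > 0` the quotient is eventually `≥ −ε` along `𝓝[≠] 0`. -/
theorem stmt_4 (m : ℕ) (hm : 1 ≤ m) (p q : ℝ) (hp : 1 ≤ p) (hq0 : 0 < q) (hq1 : q < 1)
    (u : EuclideanSpace ℝ (Fin m)) :
    ∀ ε > (0 : ℝ), ∀ᶠ z in 𝓝[≠] (0 : EuclideanSpace ℝ (Fin m)),
      -ε ≤ (((∑ i, |z i| ^ p) ^ (1 / p)) ^ q - ∑ i, u i * z i) / ‖z‖ := by
  intro ε hε
  have hp0 : 0 < p := by linarith
  have hcont : Continuous fun z : EuclideanSpace ℝ (Fin m) =>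
      (∑ i, |u i|) * ((∑ i, |z i| ^ p) ^ (1 / p)) ^ (1 - q) := by
    refine continuous_const.mul (Continuous.rpow_const (Continuous.rpow_const
      (continuous_finsetSum _ fun i _ => Continuous.rpow_const (by fun_prop) ?_) ?_) ?_)
    · exact fun _ => Or.inr hp0.le
    · exact fun _ => Or.inr (by positivity)
    · exact fun _ => Or.inr (by linarith)
  have hsmall : ∀ᶠ z in 𝓝 (0 : EuclideanSpace ℝ (Fin m)),
      (∑ i, |u i|) * ((∑ i, |z i| ^ p) ^ (1 / p)) ^ (1 - q) < 1 := by
    refine hcont.continuousAt.eventually_lt continuousAt_const ?_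
    simp [Real.zero_rpow hp0.ne', Real.zero_rpow (inv_pos.2 hp0).ne',
      Real.zero_rpow (sub_pos.2 hq1).ne']
  filter_upwards [nhdsWithin_le_nhds hsmall] with z hz
  have hpair := sum_mul_le_sum_abs_mul_sum_rpow hp0 u z
  have hN : 0 ≤ (∑ i, |z i| ^ p) ^ (1 / p) := by positivity
  set N := (∑ i, |z i| ^ p) ^ (1 / p)
  have hsplit : N = N ^ (1 - q) * N ^ q := by
    rw [← Real.rpow_add_of_nonneg hN (by linarith) hq0.le, sub_add_cancel, Real.rpow_one]
  have hle : (∑ i, |u i|) * N ≤ N ^ q := by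
    calc (∑ i, |u i|) * N = (∑ i, |u i|) * N ^ (1 - q) * N ^ q := by
          rw [mul_assoc, ← hsplit]
      _ ≤ N ^ q := mul_le_of_le_one_left (by positivity) hz.le
  have hquot : 0 ≤ (N ^ q - ∑ i, u i * z i) / ‖z‖ :=
    div_nonneg (by linarith) (norm_nonneg z)
  linarith
end

section
/- Let 0 < q < 1 and let y ∈ ℝ^m with y ≠ 0. A vector u ∈ ℝ^m is a regular (Fréchet) subgradient of the function z ↦ ‖z‖_1^q at y if and only if u_j = q·‖y‖_1^{q−1}·sgn(y_j) for every index j with y_j ≠ 0, and |u_j| ≤ q·‖y‖_1^{q−1} for every index j with y_j = 0. -/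
open Topology Filter

/-- Near `y ≠ 0`, the power `‖z‖₁ ^ q` agrees to first order with the linearization of `t ↦ t ^ q`
at `‖y‖₁`, evaluated at `‖z‖₁`. -/
lemma isLittleO_sum_abs_rpow_sub {ι : Type*} [Fintype ι] (q : ℝ) {y : EuclideanSpace ℝ ι}
    (hy : 0 < ∑ i, |y i|) :
    (fun z : EuclideanSpace ℝ ι => (∑ i, |z i|) ^ q - (∑ i, |y i|) ^ q
      - q * (∑ i, |y i|) ^ (q - 1) * ((∑ i, |z i|) - ∑ i, |y i|)) =o[𝓝 y] fun z => z - y := by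
  have hderiv := (Real.hasDerivAt_rpow_const (p := q) (Or.inl hy.ne')).isLittleO
  have hcont : Tendsto (fun z : EuclideanSpace ℝ ι => ∑ i, |z i|) (𝓝 y) (𝓝 (∑ i, |y i|)) :=
    Continuous.tendsto (by fun_prop) y
  have hlip : (fun z : EuclideanSpace ℝ ι => (∑ i, |z i|) - ∑ i, |y i|) =O[𝓝 y]
      fun z => z - y := by
    refine Asymptotics.IsBigO.of_bound (Fintype.card ι) (Eventually.of_forall fun z => ?_)
    rw [← Finset.sum_sub_distrib]
    calc ‖∑ i, (|z i| - |y i|)‖ ≤ ∑ i, ‖|z i| - |y i|‖ := norm_sum_le _ _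
      _ ≤ ∑ _i : ι, ‖z - y‖ := by
        refine Finset.sum_le_sum fun i _ => ?_
        exact (abs_abs_sub_abs_le _ _).trans (PiLp.norm_apply_le (z - y) i)
      _ = Fintype.card ι * ‖z - y‖ := by simp
  refine ((hderiv.comp_tendsto hcont).trans_isBigO hlip).congr_left fun z => ?_
  simp only [Function.comp_apply, smul_eq_mul]
  ring

/-- A function `f` and a first-order approximation `g` of it satisfy the same regular
subgradient inequality at `y`. -/
lemma eventually_neg_le_div_iff_of_isLittleO {E : Type*} [NormedAddCommGroup E] {y : E}
    {f g : E → ℝ} (h : (fun z => f z - g z) =o[𝓝 y] fun z => z - y) :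
    (∀ ε > (0 : ℝ), ∀ᶠ z in 𝓝[≠] y, -ε ≤ f z / ‖z - y‖) ↔
      ∀ ε > (0 : ℝ), ∀ᶠ z in 𝓝[≠] y, -ε * ‖z - y‖ ≤ g z := by
  have key : ∀ ε > (0 : ℝ), ∀ᶠ z in 𝓝[≠] y, |f z - g z| ≤ ε / 2 * ‖z - y‖ := fun ε hε =>
    (h.def (half_pos hε)).filter_mono nhdsWithin_le_nhds
  constructor
  · intro H ε hε
    filter_upwards [H (ε / 2) (half_pos hε), key ε hε, self_mem_nhdsWithin] with z h₁ h₂ h₃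
    rw [le_div_iff₀ (norm_sub_pos_iff.2 h₃)] at h₁
    linarith [(abs_le.1 h₂).2]
  · intro H ε hε
    filter_upwards [H (ε / 2) (half_pos hε), key ε hε, self_mem_nhdsWithin] with z h₁ h₂ h₃
    rw [le_div_iff₀ (norm_sub_pos_iff.2 h₃)]
    linarith [(abs_le.1 h₂).1]

/-- One-sided directional test along a coordinate axis for the regular subgradients of
`c * ‖·‖₁`: if `|y j + σ t| = |y j| + d t` for small `t > 0`, then `u j * σ ≤ c * d`. -/
lemma mul_le_of_eventually_neg_le {ι : Type*} [Fintype ι] {c σ d : ℝ}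
    {y u : EuclideanSpace ℝ ι} (j : ι) (hσ : |σ| = 1)
    (hd : ∀ᶠ t in 𝓝[>] (0 : ℝ), |y j + σ * t| = |y j| + d * t)
    (H : ∀ ε > (0 : ℝ), ∀ᶠ z in 𝓝[≠] y, -ε * ‖z - y‖ ≤
      c * ((∑ i, |z i|) - ∑ i, |y i|) - ∑ i, u i * (z i - y i)) :
    u j * σ ≤ c * d := by
  classical
  refine le_of_forall_pos_le_add fun ε hε => ?_
  have hσ0 : σ ≠ 0 := by
    rintro rfl
    simp at hσ
  have htend : Tendsto (fun t : ℝ => y + EuclideanSpace.single j (σ * t)) (𝓝[>] 0) (𝓝[≠] y) := by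
    refine tendsto_nhdsWithin_iff.2 ⟨?_, ?_⟩
    · have hc : Continuous fun t : ℝ => y + t • EuclideanSpace.single j σ := by fun_prop
      have h0 := (hc.tendsto 0).mono_left (nhdsWithin_le_nhds (s := Set.Ioi 0))
      simp only [zero_smul, add_zero] at h0
      refine h0.congr fun t => ?_
      ext i
      by_cases hi : i = j <;> simp [hi, mul_comm]
    · filter_upwards [self_mem_nhdsWithin] with t ht
      have ht0 : t ≠ 0 := ne_of_gt ht
      simp [hσ0, ht0]
  obtain ⟨t, h₁, h₂, ht⟩ :=
    ((htend.eventually (H ε hε)).and (hd.and self_mem_nhdsWithin)).exists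
  have ht : 0 < t := ht
  have hsum : (∑ i, |(y + EuclideanSpace.single j (σ * t)) i|) - ∑ i, |y i| = d * t := by
    rw [← Finset.sum_sub_distrib, Finset.sum_eq_single j]
    · simp [h₂]
    · intro i _ hi
      simp [hi]
    · simp
  have hinner : ∑ i, u i * ((y + EuclideanSpace.single j (σ * t)) i - y i) = u j * σ * t := by
    rw [Finset.sum_eq_single j]
    · simp [mul_assoc]
    · intro i _ hi
      simp [hi]
    · simp
  rw [hsum, hinner, add_sub_cancel_left, PiLp.norm_single, norm_mul, Real.norm_eq_abs,
    hσ, one_mul, Real.norm_of_nonneg ht.le] at h₁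
  refine le_of_mul_le_mul_right ?_ ht
  linarith

/-- For `a ≠ 0` the absolute value is affine near `a`, with slope `sign a`. -/
lemma eventually_abs_add_mul_eq {a : ℝ} (ha : a ≠ 0) (σ : ℝ) :
    ∀ᶠ t in 𝓝[>] (0 : ℝ), |a + σ * t| = |a| + Real.sign a * σ * t := by
  have hlim : Tendsto (fun t : ℝ => a + σ * t) (𝓝[>] 0) (𝓝 a) := by
    have hc : Continuous fun t : ℝ => a + σ * t := by fun_prop
    simpa using (hc.tendsto 0).mono_left nhdsWithin_le_nhds
  rcases ha.lt_or_gt with h | h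
  · filter_upwards [hlim.eventually_lt_const h] with t ht
    rw [abs_of_neg ht, abs_of_neg h, Real.sign_of_neg h]
    ring
  · filter_upwards [hlim.eventually_const_lt h] with t ht
    rw [abs_of_pos ht, abs_of_pos h, Real.sign_of_pos h]
    ring

/-- The regular subgradients of `c * ‖·‖₁`, for `c ≥ 0`, are described coordinatewise. -/
lemma eventually_neg_le_mul_sum_abs_iff {ι : Type*} [Fintype ι] {c : ℝ} (hc : 0 ≤ c)
    (y u : EuclideanSpace ℝ ι) :
    (∀ ε > (0 : ℝ), ∀ᶠ z in 𝓝[≠] y, -ε * ‖z - y‖ ≤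
        c * ((∑ i, |z i|) - ∑ i, |y i|) - ∑ i, u i * (z i - y i)) ↔
      (∀ j, y j ≠ 0 → u j = c * Real.sign (y j)) ∧ ∀ j, y j = 0 → |u j| ≤ c := by
  constructor
  · intro H
    refine ⟨fun j hj => ?_, fun j hj => ?_⟩
    · have h₁ := mul_le_of_eventually_neg_le j (by simp) (eventually_abs_add_mul_eq hj 1) H
      have h₂ := mul_le_of_eventually_neg_le j (by simp) (eventually_abs_add_mul_eq hj (-1)) H
      linarith
    · have hd : ∀ σ : ℝ, |σ| = 1 →
          ∀ᶠ t in 𝓝[>] (0 : ℝ), |y j + σ * t| = |y j| + 1 * t := fun σ hσ => by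
        filter_upwards [self_mem_nhdsWithin] with t ht
        rw [hj, zero_add, abs_mul, hσ, abs_of_pos ht, abs_zero, zero_add]
      have h₁ := mul_le_of_eventually_neg_le j (by simp) (hd 1 (by simp)) H
      have h₂ := mul_le_of_eventually_neg_le j (by simp) (hd (-1) (by simp)) H
      exact abs_le.2 ⟨by linarith, by linarith⟩
  · rintro ⟨hne, hzero⟩ ε hε
    refine Eventually.of_forall fun z => ?_
    have hle : ∑ i, u i * (z i - y i) ≤ c * ((∑ i, |z i|) - ∑ i, |y i|) := by
      rw [← Finset.sum_sub_distrib, Finset.mul_sum]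
      refine Finset.sum_le_sum fun i _ => ?_
      rcases lt_trichotomy (y i) 0 with h | h | h
      · rw [hne i h.ne, Real.sign_of_neg h, abs_of_neg h]
        nlinarith [mul_le_mul_of_nonneg_left (neg_le_abs (z i)) hc]
      · rw [h, sub_zero, abs_zero, sub_zero]
        calc u i * z i ≤ |u i| * |z i| := (le_abs_self _).trans (abs_mul _ _).le
          _ ≤ c * |z i| := mul_le_mul_of_nonneg_right (hzero i h) (abs_nonneg _)
      · rw [hne i h.ne', Real.sign_of_pos h, abs_of_pos h]
        nlinarith [mul_le_mul_of_nonneg_left (le_abs_self (z i)) hc]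
    have : 0 ≤ ε * ‖z - y‖ := by positivity
    linarith

/-- Characterization of the regular (Fréchet) subgradients of `z ↦ ‖z‖₁^q` at `y ≠ 0`:
`u` is a regular subgradient (i.e. the liminf as `z → y`, `z ≠ y`, of
`(‖z‖₁^q − ‖y‖₁^q − ⟨u, z − y⟩)/‖z − y‖₂` is nonnegative) iff
`u_j = q‖y‖₁^(q−1) sgn(y_j)` whenever `y_j ≠ 0` and `|u_j| ≤ q‖y‖₁^(q−1)` whenever `y_j = 0`. -/
theorem stmt_6 (m : ℕ) (q : ℝ) (hq0 : 0 < q) (hq1 : q < 1)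
    (y u : EuclideanSpace ℝ (Fin m)) (hy : y ≠ 0) :
    (∀ ε > (0 : ℝ), ∀ᶠ z in 𝓝[≠] y,
        -ε ≤ ((∑ i, |z i|) ^ q - (∑ i, |y i|) ^ q - ∑ i, u i * (z i - y i)) / ‖z - y‖) ↔
      ((∀ j, y j ≠ 0 → u j = q * (∑ i, |y i|) ^ (q - 1) * Real.sign (y j)) ∧
        (∀ j, y j = 0 → |u j| ≤ q * (∑ i, |y i|) ^ (q - 1))) := by
  have hpos : 0 < ∑ i, |y i| := by
    obtain ⟨j, hj⟩ : ∃ j, y j ≠ 0 := by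
      by_contra! h
      exact hy (by ext i; simp [h i])
    exact Finset.sum_pos' (fun i _ => abs_nonneg _) ⟨j, Finset.mem_univ j, abs_pos.2 hj⟩
  rw [← eventually_neg_le_mul_sum_abs_iff (by positivity) y u]
  refine eventually_neg_le_div_iff_of_isLittleO
    ((isLittleO_sum_abs_rpow_sub q hpos).congr_left fun z => ?_)
  ring
end

section
/- Let p > 1, 0 < q < 1, 1 < r < ∞, α > 0. Suppose x* ∈ ℝ^N is a local minimizer of E(x) = ∑_{i=1}^G ‖x_i‖_p^q + (1/(rα))·∑_{k=1}^M |(Ax − y)_k|^r, and suppose the group i of x* is nonzero. Then for every coordinate j belonging to group i, q·‖x*_i‖_p^{q−p}·|x*_j|^{p−1}·sgn(x*_j) + (1/α)·∑_{k=1}^M |(Ax* − y)_k|^{r−1}·sgn((Ax* − y)_k)·A_{k,j} = 0. -/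
open Finset

/-- The derivative of `|f|^p` along a curve, for `1 < p`, in terms of `Real.sign`. -/
lemma HasDerivAt.abs_rpow_sign {f : ℝ → ℝ} {f' t p : ℝ} (hf : HasDerivAt f f' t) (hp : 1 < p) :
    HasDerivAt (fun s => |f s| ^ p) (p * (|f t| ^ (p - 1) * Real.sign (f t) * f')) t := by
  have hpow : |f t| ^ (p - 2) * f t = |f t| ^ (p - 1) * Real.sign (f t) := by
    rcases eq_or_ne (f t) 0 with h | h
    · simp [h]
    · have habs : 0 < |f t| := abs_pos.mpr h
      rw [show p - 1 = p - 2 + 1 by ring, Real.rpow_add_one habs.ne', mul_assoc]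
      congr 1
      rcases lt_or_gt_of_ne h with h | h
      · simp [Real.sign_of_neg h, abs_of_neg h]
      · simp [Real.sign_of_pos h, abs_of_pos h]
  refine ((hasDerivAt_abs_rpow (f t) hp).comp t hf).congr_deriv ?_
  rw [mul_assoc p, hpow]
  ring

/-- The derivative of the `q`-th power of an `ℓ_p` norm, written in terms of the inner sum of
`p`-th powers. -/
lemma HasDerivAt.rpow_inv_rpow {S : ℝ → ℝ} {d t p : ℝ} (q : ℝ) (hp : 0 < p)
    (hS : HasDerivAt S (p * d) t) (hpos : 0 < S t) :
    HasDerivAt (fun s => (S s ^ (1 / p)) ^ q) (q * (S t ^ (1 / p)) ^ (q - p) * d) t := by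
  have hroot : 0 < S t ^ (1 / p) := Real.rpow_pos_of_pos hpos _
  refine ((hS.rpow_const (p := 1 / p) (Or.inl hpos.ne')).rpow_const (p := q)
    (Or.inl hroot.ne')).congr_deriv ?_
  have hexp : S t ^ (1 / p - 1) = (S t ^ (1 / p)) ^ (1 - p) := by
    rw [← Real.rpow_mul hpos.le]
    congr 1
    field_simp
  rw [hexp, show q - p = (1 - p) + (q - 1) by ring, Real.rpow_add hroot]
  field_simp

/-- First-order optimality condition at a local minimizer of the group `ℓ_{p,q}`-`ℓ_r`
objective, on the coordinates of a nonzero group. -/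
theorem stmt_7 (N M G : ℕ) (g : Fin N → Fin G) (p q r α : ℝ)
    (hp : 1 < p) (hq0 : 0 < q) (hq1 : q < 1) (hr : 1 < r) (hα : 0 < α)
    (A : Matrix (Fin M) (Fin N) ℝ) (y : Fin M → ℝ) (xstar : Fin N → ℝ)
    (hmin : IsLocalMin (fun x : Fin N → ℝ =>
        (∑ i : Fin G, ((∑ j ∈ univ.filter fun j => g j = i, |x j| ^ p) ^ (1 / p)) ^ q)
          + (1 / (r * α)) * ∑ k, |(A.mulVec x - y) k| ^ r) xstar)
    (i : Fin G) (hne : ∃ j, g j = i ∧ xstar j ≠ 0) :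
    ∀ j, g j = i →
      q * ((∑ j' ∈ univ.filter fun j' => g j' = i, |xstar j'| ^ p) ^ (1 / p)) ^ (q - p)
            * |xstar j| ^ (p - 1) * Real.sign (xstar j)
        + (1 / α) * ∑ k, |(A.mulVec xstar - y) k| ^ (r - 1)
            * Real.sign ((A.mulVec xstar - y) k) * A k j = 0 := by
  intro j hj
  have hupd : Function.update xstar j (xstar j) = xstar := Function.update_eq_self j xstar
  have hpath : HasDerivAt (Function.update xstar j) (Pi.single j 1) (xstar j) :=
    hasDerivAt_update xstar j (xstar j)
  have hcoord (l : Fin N) := hasDerivAt_pi.mp hpath l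
  have hpos : 0 < ∑ l ∈ univ.filter fun l => g l = i, |xstar l| ^ p := by
    obtain ⟨l, hl, hl0⟩ := hne
    exact sum_pos' (fun _ _ => by positivity)
      ⟨l, by simp [hl], Real.rpow_pos_of_pos (abs_pos.mpr hl0) _⟩
  have hsum : HasDerivAt
      (fun t => ∑ l ∈ univ.filter fun l => g l = i, |Function.update xstar j t l| ^ p)
      (p * (|xstar j| ^ (p - 1) * Real.sign (xstar j))) (xstar j) := by
    refine (HasDerivAt.fun_sum fun l _ => (hcoord l).abs_rpow_sign hp).congr_deriv ?_
    rw [hupd, sum_eq_single_of_mem j (by simp [hj])]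
    · simp
    · intro l _ hl
      simp [hl]
  have hgroup (i' : Fin G) : HasDerivAt
      (fun t => ((∑ l ∈ univ.filter fun l => g l = i', |Function.update xstar j t l| ^ p)
        ^ (1 / p)) ^ q)
      (if i' = i then q * ((∑ l ∈ univ.filter fun l => g l = i, |xstar l| ^ p) ^ (1 / p)) ^ (q - p)
        * (|xstar j| ^ (p - 1) * Real.sign (xstar j)) else 0) (xstar j) := by
    split_ifs with h
    · subst h
      simpa only [hupd] using hsum.rpow_inv_rpow q (zero_lt_one.trans hp) (by simpa only [hupd])
    · refine (hasDerivAt_const (xstar j) (((∑ l ∈ univ.filter fun l => g l = i', |xstar l| ^ p)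
        ^ (1 / p)) ^ q)).congr_of_eventuallyEq (Filter.Eventually.of_forall fun t => ?_)
      dsimp only
      congr 2
      refine sum_congr rfl fun l hl => ?_
      rw [Function.update_of_ne]
      rintro rfl
      exact h ((mem_filter.mp hl).2.symm.trans hj)
  have hresidual (k : Fin M) : HasDerivAt
      (fun t => (A.mulVec (Function.update xstar j t) - y) k) (A k j) (xstar j) := by
    have := (HasDerivAt.fun_sum (u := univ) fun l _ => (hcoord l).const_mul (A k l)).sub_const (y k)
    refine this.congr_deriv ?_
    simp [Pi.single_apply]
  have htotal := (HasDerivAt.fun_sum (u := univ) fun i' _ => hgroup i').add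
    ((HasDerivAt.fun_sum (u := univ) fun k _ =>
      (hresidual k).abs_rpow_sign hr).const_mul (1 / (r * α)))
  rw [← hupd] at hmin
  have hcrit := (hmin.comp_continuous hpath.continuousAt).hasDerivAt_eq_zero htotal
  rw [hupd, ← mul_sum, sum_ite_eq' univ i, if_pos (mem_univ i), ← mul_assoc (1 / (r * α)),
    show 1 / (r * α) * r = 1 / α by field_simp, ← mul_assoc] at hcrit
  exact hcrit
end

section
/- Let p > 1, 0 < q < 1, 1 < r < ∞, α > 0. Suppose x* ∈ ℝ^N is a local minimizer of E(x) = ∑_{i=1}^G ‖x_i‖_p^q + (1/(rα))·∑_{k=1}^M |(Ax − y)_k|^r, and suppose the group i of x* is nonzero. Then q·‖x*_i‖_p^{q−1} ≤ (1/α)·∑_{j : g(j)=i} ∑_{k=1}^M |(Ax* − y)_k|^{r−1}·|A_{k,j}|. -/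
open Finset

/-- The `ℓ_p` expression of a finite family is absolutely homogeneous. -/
lemma rpow_sum_abs_mul_rpow {ι : Type*} (s : Finset ι) (x : ι → ℝ) {p : ℝ} (hp : 0 < p) (c : ℝ) :
    (∑ j ∈ s, |c * x j| ^ p) ^ (1 / p) = |c| * (∑ j ∈ s, |x j| ^ p) ^ (1 / p) := by
  have hp_ne : p ≠ 0 := hp.ne'
  simp_rw [abs_mul, Real.mul_rpow (abs_nonneg _) (abs_nonneg _)]
  rw [← Finset.mul_sum, Real.mul_rpow (by positivity) (by positivity), one_div,
    Real.rpow_rpow_inv (abs_nonneg c) hp_ne]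

/-- Each entry of a finite family is bounded by its `ℓ_p` expression. -/
lemma abs_le_rpow_sum_abs_rpow {ι : Type*} {s : Finset ι} (x : ι → ℝ) {p : ℝ} (hp : 0 < p)
    {j : ι} (hj : j ∈ s) : |x j| ≤ (∑ j ∈ s, |x j| ^ p) ^ (1 / p) := by
  calc |x j| = (|x j| ^ p) ^ (1 / p) := by
        rw [one_div, Real.rpow_rpow_inv (abs_nonneg _) hp.ne']
    _ ≤ _ := by
        refine Real.rpow_le_rpow (by positivity) ?_ (by positivity)
        exact Finset.single_le_sum (f := fun j => |x j| ^ p) (fun _ _ => by positivity) hj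

/-- The derivative of `t ↦ |a + t * b| ^ r` at `0`. -/
lemma hasDerivAt_abs_add_mul_rpow {r : ℝ} (hr : 1 < r) (a b : ℝ) :
    HasDerivAt (fun t : ℝ => |a + t * b| ^ r) (r * |a| ^ (r - 2) * a * b) 0 := by
  have hlin : HasDerivAt (fun t : ℝ => a + t * b) b 0 := by
    simpa using ((hasDerivAt_id (0 : ℝ)).mul_const b).const_add a
  have habs : HasDerivAt (fun z : ℝ => |z| ^ r) (r * |a| ^ (r - 2) * a) (a + 0 * b) := by
    simpa using hasDerivAt_abs_rpow a hr
  exact habs.comp (0 : ℝ) hlin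

lemma abs_abs_rpow_sub_two_mul {r : ℝ} (hr : 1 < r) (a : ℝ) :
    |(|a| ^ (r - 2) * a)| = |a| ^ (r - 1) := by
  rcases eq_or_ne a 0 with rfl | ha
  · simp [Real.zero_rpow (by linarith : r - 1 ≠ 0)]
  · rw [abs_mul, abs_of_nonneg (by positivity), ← Real.rpow_add_one (abs_ne_zero.2 ha)]
    congr 1
    ring

/-- The derivative of `t ↦ |1 + t| ^ q` at `0`. -/
lemma hasDerivAt_abs_one_add_rpow (q : ℝ) :
    HasDerivAt (fun t : ℝ => |1 + t| ^ q) q 0 := by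
  have hlin : HasDerivAt (fun t : ℝ => 1 + t) 1 0 := (hasDerivAt_id (0 : ℝ)).const_add 1
  have habs : HasDerivAt (fun t : ℝ => |1 + t|) 1 0 := by
    refine hlin.congr_of_eventuallyEq ?_
    filter_upwards [lt_mem_nhds (show (-1 : ℝ) < 0 by norm_num)] with t ht
    exact abs_of_pos (by linarith)
  simpa using habs.rpow_const (p := q) (Or.inl (by simp))

/-- Lower-bound inequality at a local minimizer of the group `ℓ_{p,q}`-`ℓ_r` objective:
for a nonzero group `i`, `q‖x*_i‖_p^(q−1)` is bounded by the (scaled) sum of the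
fidelity subgradient magnitudes over the coordinates of group `i`. -/
theorem stmt_8 (N M G : ℕ) (g : Fin N → Fin G) (p q r α : ℝ)
    (hp : 1 < p) (hq0 : 0 < q) (hq1 : q < 1) (hr : 1 < r) (hα : 0 < α)
    (A : Matrix (Fin M) (Fin N) ℝ) (y : Fin M → ℝ) (xstar : Fin N → ℝ)
    (hmin : IsLocalMin (fun x : Fin N → ℝ =>
        (∑ i : Fin G, ((∑ j ∈ univ.filter fun j => g j = i, |x j| ^ p) ^ (1 / p)) ^ q)
          + (1 / (r * α)) * ∑ k, |(A.mulVec x - y) k| ^ r) xstar)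
    (i : Fin G) (hne : ∃ j, g j = i ∧ xstar j ≠ 0) :
    q * ((∑ j ∈ univ.filter fun j => g j = i, |xstar j| ^ p) ^ (1 / p)) ^ (q - 1)
      ≤ (1 / α) * ∑ j ∈ univ.filter (fun j => g j = i),
          ∑ k, |(A.mulVec xstar - y) k| ^ (r - 1) * |A k j| := by
  have hp0 : 0 < p := by linarith
  set S : ℝ := (∑ j ∈ univ.filter fun j => g j = i, |xstar j| ^ p) ^ (1 / p) with hS
  have hle : ∀ j, g j = i → |xstar j| ≤ S := fun j hj =>
    abs_le_rpow_sum_abs_rpow xstar hp0 (by simp [hj])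
  have hSpos : 0 < S := by
    obtain ⟨j, hj, hx⟩ := hne
    exact (abs_pos.2 hx).trans_le (hle j hj)
  -- Perturb `xstar` by rescaling group `i`.
  let d : Fin N → ℝ := fun j => if g j = i then xstar j else 0
  let res : Fin M → ℝ := A.mulVec xstar - y
  let C : ℝ := ∑ l ∈ univ.erase i,
    ((∑ j ∈ univ.filter fun j => g j = l, |xstar j| ^ p) ^ (1 / p)) ^ q
  have hpath : IsLocalMin (fun t : ℝ => (|1 + t| ^ q * S ^ q + C)
      + (1 / (r * α)) * ∑ k, |res k + t * A.mulVec d k| ^ r) 0 := by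
    have hcont : ContinuousAt (fun t : ℝ => xstar + t • d) 0 := by fun_prop
    have hcomp := IsLocalMin.comp_continuous (g := fun t : ℝ => xstar + t • d) (b := 0)
      (by simpa only [zero_smul, add_zero] using hmin) hcont
    convert hcomp using 2 with t
    simp only [Function.comp_apply]
    congr 1
    · rw [← Finset.add_sum_erase _ _ (Finset.mem_univ i)]
      congr 1
      · rw [← Real.mul_rpow (abs_nonneg _) hSpos.le, hS, ← rpow_sum_abs_mul_rpow _ _ hp0]
        congr 2
        refine Finset.sum_congr rfl fun j hj => ?_
        have hj' : g j = i := by simpa using hj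
        simp [d, hj', add_mul]
      · refine Finset.sum_congr rfl fun l hl => ?_
        congr 2
        refine Finset.sum_congr rfl fun j hj => ?_
        have hj' : g j ≠ i := by
          rw [(Finset.mem_filter.1 hj).2]
          exact Finset.ne_of_mem_erase hl
        simp [d, hj']
    · congr 1
      refine Finset.sum_congr rfl fun k _ => ?_
      simp only [res, Matrix.mulVec_add, Matrix.mulVec_smul, Pi.sub_apply, Pi.add_apply,
        Pi.smul_apply, smul_eq_mul]
      congr 2
      ring
  have hderiv := (((hasDerivAt_abs_one_add_rpow q).mul_const (S ^ q)).add_const C).add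
    ((HasDerivAt.fun_sum fun k (_ : k ∈ (univ : Finset (Fin M))) =>
      hasDerivAt_abs_add_mul_rpow hr (res k) (A.mulVec d k)).const_mul (1 / (r * α)))
  have hzero := hpath.hasDerivAt_eq_zero hderiv
  have hAd : ∀ k, |A.mulVec d k| ≤ S * ∑ j ∈ univ.filter (fun j => g j = i), |A k j| := by
    intro k
    have hsum : A.mulVec d k = ∑ j ∈ univ.filter (fun j => g j = i), A k j * xstar j := by
      simp [Matrix.mulVec, dotProduct, d, Finset.sum_filter]
    rw [hsum, Finset.mul_sum]
    refine (Finset.abs_sum_le_sum_abs _ _).trans (Finset.sum_le_sum fun j hj => ?_)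
    rw [abs_mul, mul_comm]
    exact mul_le_mul_of_nonneg_right (hle j (by simpa using hj)) (abs_nonneg _)
  have hfid : -∑ k, |res k| ^ (r - 2) * res k * A.mulVec d k
      ≤ S * ∑ j ∈ univ.filter (fun j => g j = i), ∑ k, |res k| ^ (r - 1) * |A k j| := by
    rw [Finset.sum_comm, Finset.mul_sum, ← Finset.sum_neg_distrib]
    refine Finset.sum_le_sum fun k _ => (neg_le_abs _).trans ?_
    rw [abs_mul, abs_abs_rpow_sub_two_mul hr, ← Finset.mul_sum, mul_left_comm]
    exact mul_le_mul_of_nonneg_left (hAd k) (by positivity)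
  have hstat : q * S ^ q = (1 / α) * -∑ k, |res k| ^ (r - 2) * res k * A.mulVec d k := by
    have hfactor : ∑ k, r * |res k| ^ (r - 2) * res k * A.mulVec d k
        = r * ∑ k, |res k| ^ (r - 2) * res k * A.mulVec d k := by
      rw [Finset.mul_sum]
      exact Finset.sum_congr rfl fun k _ => by ring
    rw [hfactor] at hzero
    have hr0 : r ≠ 0 := by linarith
    field_simp at hzero ⊢
    linarith
  refine le_of_mul_le_mul_left ?_ hSpos
  calc S * (q * S ^ (q - 1)) = q * S ^ q := by
        rw [Real.rpow_sub_one hSpos.ne']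
        field_simp
    _ ≤ (1 / α) * (S * ∑ j ∈ univ.filter (fun j => g j = i),
          ∑ k, |res k| ^ (r - 1) * |A k j|) := by
        rw [hstat]
        exact mul_le_mul_of_nonneg_left hfid (by positivity)
    _ = _ := mul_left_comm _ _ _
end

section
/- Let n ≥ 1, β > 0, and let v ∈ ℝ^n have entries sorted in ascending order of absolute value: |v_1| ≤ |v_2| ≤ … ≤ |v_n|; adopt the convention |v_0| := 0. Suppose i* ∈ {0, 1, …, n−1} is such that the number t* := (1/(n − i*))·( ∑_{j=i*+1}^n |v_j| − 1/(2β) ) satisfies |v_{i*}| ≤ t* ≤ |v_{i*+1}|. Define s* ∈ ℝ^n by s*_i = v_i for i ≤ i* and s*_i = sgn(v_i)·t* for i > i*. Then s* is an optimal solution of the problem min_{s ∈ ℝ^n} ‖s‖_∞ + β‖s − v‖_2², i.e., ‖s*‖_∞ + β‖s* − v‖_2² ≤ ‖s‖_∞ + β‖s − v‖_2² for all s ∈ ℝ^n. -/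
open Finset

/-- Clipping a real number at a level `t ≤ |x|` changes it by `|x| - t`. -/
theorem sign_mul_sub_self_sq {x t : ℝ} (ht : 0 ≤ t) (htx : t ≤ |x|) :
    (Real.sign x * t - x) ^ 2 = (|x| - t) ^ 2 := by
  rcases lt_trichotomy x 0 with hx | rfl | hx
  · rw [Real.sign_of_neg hx, abs_of_neg hx]; ring
  · have : t = 0 := le_antisymm (by simpa using htx) ht
    simp [this]
  · rw [Real.sign_of_pos hx, abs_of_pos hx]; ring

theorem abs_sign_mul_le (x : ℝ) {t : ℝ} (ht : 0 ≤ t) : |Real.sign x * t| ≤ t := by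
  rcases Real.sign_apply_eq x with h | h | h <;> simp [h, ht, abs_of_nonneg]

/-- First-order lower bound for the squared distance from `x` to a point `y` with `|y| ≤ M`. -/
theorem sq_add_two_mul_le_sub_sq {x y t M : ℝ} (htx : t ≤ |x|) (hy : |y| ≤ M) :
    (|x| - t) ^ 2 + 2 * (|x| - t) * (t - M) ≤ (y - x) ^ 2 := by
  have h : (|y| - |x|) ^ 2 ≤ (y - x) ^ 2 := sq_le_sq.mpr (abs_abs_sub_abs_le y x)
  nlinarith [mul_nonneg (sub_nonneg.mpr htx) (sub_nonneg.mpr hy), sq_nonneg (|y| - t)]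

/-- Explicit optimal solution of `min_s ‖s‖_∞ + β‖s − v‖₂²` when the entries of `v`
(indexed `1, …, n`) are sorted in ascending order of absolute value.  The convention
`|v_0| := 0` is encoded by the hypothesis `v 0 = 0`. -/
theorem stmt_10 (n : ℕ) (hn : 1 ≤ n) (β : ℝ) (hβ : 0 < β)
    (v : ℕ → ℝ) (hv0 : v 0 = 0)
    (hsorted : ∀ i ∈ Finset.Icc 1 n, ∀ j ∈ Finset.Icc 1 n, i ≤ j → |v i| ≤ |v j|)
    (istar : ℕ) (histar : istar ≤ n - 1)
    (tstar : ℝ)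
    (htstar : tstar = (∑ j ∈ Finset.Icc (istar + 1) n, |v j| - 1 / (2 * β)) / (n - istar))
    (hlow : |v istar| ≤ tstar) (hhigh : tstar ≤ |v (istar + 1)|)
    (sstar : ℕ → ℝ)
    (hsstar : ∀ i, sstar i = if i ≤ istar then v i else Real.sign (v i) * tstar) :
    ∀ s : ℕ → ℝ,
      ((Finset.Icc 1 n).sup' (Finset.nonempty_Icc.mpr hn) fun i => |sstar i|)
          + β * ∑ i ∈ Finset.Icc 1 n, (sstar i - v i) ^ 2
        ≤ ((Finset.Icc 1 n).sup' (Finset.nonempty_Icc.mpr hn) fun i => |s i|)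
          + β * ∑ i ∈ Finset.Icc 1 n, (s i - v i) ^ 2 := by
  intro s
  have hlt : istar < n := by omega
  have ht : 0 ≤ tstar := (abs_nonneg _).trans hlow
  set M := (Finset.Icc 1 n).sup' (Finset.nonempty_Icc.mpr hn) fun i => |s i|
  have hsM : ∀ i ∈ Finset.Icc 1 n, |s i| ≤ M := fun i hi =>
    Finset.le_sup' (fun i => |s i|) hi
  have hsup : ((Finset.Icc 1 n).sup' (Finset.nonempty_Icc.mpr hn) fun i => |sstar i|)
      ≤ tstar := by
    refine Finset.sup'_le _ _ fun i hi => ?_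
    rw [hsstar]
    split_ifs with h
    · have hi1 := (Finset.mem_Icc.mp hi).1
      exact (hsorted i hi istar (Finset.mem_Icc.mpr ⟨hi1.trans h, hlt.le⟩) h).trans hlow
    · exact abs_sign_mul_le _ ht
  have hterm : ∀ i ∈ Finset.Icc 1 n,
      (sstar i - v i) ^ 2 + (if i ≤ istar then 0 else |v i| - tstar) * (2 * (tstar - M))
        ≤ (s i - v i) ^ 2 := by
    intro i hi
    rw [hsstar]
    split_ifs with h
    · simpa using sq_nonneg (s i - v i)
    · have htv : tstar ≤ |v i| := hhigh.trans
        (hsorted _ (Finset.mem_Icc.mpr ⟨by omega, hlt⟩) i hi (by omega))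
      rw [sign_mul_sub_self_sq ht htv]
      linarith [sq_add_two_mul_le_sub_sq htv (hsM i hi)]
  have hweights : ∑ i ∈ Finset.Icc 1 n, (if i ≤ istar then 0 else |v i| - tstar)
      = 1 / (2 * β) := by
    have hfilter : (Finset.Icc 1 n).filter (fun i => ¬ i ≤ istar)
        = Finset.Icc (istar + 1) n := by
      ext i; simp only [Finset.mem_filter, Finset.mem_Icc]; omega
    have hne : (n : ℝ) - istar ≠ 0 := sub_ne_zero.mpr (by exact_mod_cast hlt.ne')
    rw [eq_div_iff hne] at htstar
    rw [Finset.sum_ite, Finset.sum_const_zero, zero_add, hfilter, Finset.sum_sub_distrib,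
      Finset.sum_const, Nat.card_Icc, nsmul_eq_mul, Nat.add_sub_add_right,
      Nat.cast_sub hlt.le]
    linarith
  have hsum := Finset.sum_le_sum hterm
  rw [Finset.sum_add_distrib, ← Finset.sum_mul, hweights] at hsum
  have hβsum := mul_le_mul_of_nonneg_left hsum hβ.le
  have hcancel : β * (1 / (2 * β) * (2 * (tstar - M))) = tstar - M := by
    field_simp
  rw [mul_add, hcancel] at hβsum
  linarith
end

section
/- Let v ∈ ℝ^n and β > 0. Then the infimum over s ∈ ℝ^n of ‖s‖_∞ + β‖s − v‖_2² equals the infimum over t ∈ [0, ∞) of t + β·∑_{i=1}^n (max(|v_i| − t, 0))², and the latter infimum is attained at some t ∈ [0, ‖v‖_∞]. -/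
/-- If `|s| ≤ t`, then `s` is at distance at least `max (|v| - t) 0` from `v`. -/
theorem sq_max_abs_sub_le_sq_sub {s v t : ℝ} (h : |s| ≤ t) :
    max (|v| - t) 0 ^ 2 ≤ (s - v) ^ 2 := by
  rw [← sq_abs (s - v)]
  refine pow_le_pow_left₀ (le_max_right _ _) (max_le ?_ (abs_nonneg _)) 2
  have := abs_sub_abs_le_abs_sub v s
  rw [abs_sub_comm] at this
  linarith

/-- The projection of `v` onto `[-t, t]` is at distance `max (|v| - t) 0` from `v`. -/
theorem exists_abs_le_sq_sub_eq (v : ℝ) {t : ℝ} (ht : 0 ≤ t) :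
    ∃ s : ℝ, |s| ≤ t ∧ (s - v) ^ 2 = max (|v| - t) 0 ^ 2 := by
  rcases le_total |v| t with h | h
  · exact ⟨v, h, by rw [max_eq_right (by linarith)]; ring⟩
  · rw [max_eq_left (by linarith)]
    rcases le_total 0 v with hv | hv
    · exact ⟨t, (abs_of_nonneg ht).le, by rw [abs_of_nonneg hv]; ring⟩
    · exact ⟨-t, by rw [abs_neg, abs_of_nonneg ht], by rw [abs_of_nonpos hv]; ring⟩

/-- The thresholded objective attains its minimum over `[0, ∞)` in `[0, ‖v‖]`. -/
theorem exists_isLeast_threshold {ι : Type*} [Fintype ι] (v : ι → ℝ) {β : ℝ} (hβ : 0 ≤ β) :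
    ∃ t₀ ∈ Set.Icc (0 : ℝ) ‖v‖,
      IsLeast ((fun t : ℝ => t + β * ∑ i, max (|v i| - t) 0 ^ 2) '' Set.Ici 0)
        (t₀ + β * ∑ i, max (|v i| - t₀) 0 ^ 2) := by
  have hcont : Continuous fun t : ℝ => t + β * ∑ i, max (|v i| - t) 0 ^ 2 := by fun_prop
  obtain ⟨t₀, ht₀, hmin⟩ := isCompact_Icc.exists_isMinOn
    (Set.nonempty_Icc.2 (norm_nonneg v)) hcont.continuousOn
  refine ⟨t₀, ht₀, ⟨t₀, ht₀.1, rfl⟩, ?_⟩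
  rintro _ ⟨t, ht, rfl⟩
  rcases le_total t ‖v‖ with h | h
  · exact hmin ⟨ht, h⟩
  · refine (hmin (Set.right_mem_Icc.2 (norm_nonneg v))).trans ?_
    have hzero : ∑ i, max (|v i| - ‖v‖) 0 ^ 2 = 0 := Finset.sum_eq_zero fun i _ => by
      have hi : |v i| ≤ ‖v‖ := norm_le_pi_norm v i
      rw [max_eq_right (sub_nonpos.2 hi)]
      ring
    have hnonneg : 0 ≤ β * ∑ i, max (|v i| - t) 0 ^ 2 := by positivity
    simp only [hzero]
    linarith

/-- The infimum of `‖s‖_∞ + β‖s − v‖₂²` over `s ∈ ℝ^n` equals the infimum over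
`t ∈ [0, ∞)` of `t + β ∑ (max(|v_i| − t, 0))²`, and the latter infimum is attained
at some `t ∈ [0, ‖v‖_∞]`.  Here `‖·‖` is the sup norm on `Fin n → ℝ`. -/
theorem stmt_13 (n : ℕ) (v : Fin n → ℝ) (β : ℝ) (hβ : 0 < β) :
    sInf (Set.range fun s : Fin n → ℝ => ‖s‖ + β * ∑ i, (s i - v i) ^ 2)
        = sInf ((fun t : ℝ => t + β * ∑ i, max (|v i| - t) 0 ^ 2) '' Set.Ici 0) ∧
    ∃ t ∈ Set.Icc (0 : ℝ) ‖v‖,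
      t + β * ∑ i, max (|v i| - t) 0 ^ 2
        = sInf ((fun t : ℝ => t + β * ∑ i, max (|v i| - t) 0 ^ 2) '' Set.Ici 0) := by
  obtain ⟨t₀, ht₀, hleast⟩ := exists_isLeast_threshold v hβ.le
  refine ⟨?_, t₀, ht₀, hleast.csInf_eq.symm⟩
  rw [hleast.csInf_eq]
  have hlower : ∀ s : Fin n → ℝ, t₀ + β * ∑ i, max (|v i| - t₀) 0 ^ 2
      ≤ ‖s‖ + β * ∑ i, (s i - v i) ^ 2 := fun s => by
    refine (hleast.2 ⟨‖s‖, norm_nonneg s, rfl⟩).trans ?_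
    dsimp only
    gcongr ‖s‖ + β * ∑ i, ?_ with i
    exact sq_max_abs_sub_le_sq_sub (norm_le_pi_norm s i)
  choose s hs hsv using fun i => exists_abs_le_sq_sub_eq (v i) ht₀.1
  refine IsLeast.csInf_eq ⟨⟨s, le_antisymm ?_ (hlower s)⟩, Set.forall_mem_range.2 hlower⟩
  simp only [hsv]
  gcongr
  exact (pi_norm_le_iff_of_nonneg ht₀.1).2 hs
end

section
/- Let p ≥ 1, 0 < q < 1, 1 ≤ r < ∞, α > 0, A ∈ ℝ^{M×N}, and y ∈ ℝ^M. Then the objective function E(x) = ∑_{i=1}^G ‖x_i‖_p^q + (1/(rα))·∑_{k=1}^M |(Ax − y)_k|^r attains a global minimum on ℝ^N: there exists x* ∈ ℝ^N with E(x*) ≤ E(x) for all x ∈ ℝ^N. -/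
open Finset

/-- The group penalty `∑ i, ‖x_i‖_p ^ q` dominates `‖x‖ ^ q` for the sup norm. -/
theorem norm_rpow_le_sum_group {ι κ : Type*} [Fintype ι] [Fintype κ] [DecidableEq κ]
    (g : ι → κ) {p q : ℝ} (hp : 0 < p) (hq : 0 < q) (x : ι → ℝ) :
    ‖x‖ ^ q ≤ ∑ i : κ, ((∑ j ∈ univ.filter fun j => g j = i, |x j| ^ p) ^ (1 / p)) ^ q := by
  have hS : 0 ≤ ∑ i : κ, ((∑ j ∈ univ.filter fun j => g j = i, |x j| ^ p) ^ (1 / p)) ^ q := by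
    positivity
  rw [← Real.le_rpow_inv_iff_of_pos (norm_nonneg x) hS hq,
    pi_norm_le_iff_of_nonneg (by positivity)]
  intro j
  rw [Real.le_rpow_inv_iff_of_pos (norm_nonneg _) hS hq, Real.norm_eq_abs]
  have hj : |x j| ≤ (∑ l ∈ univ.filter fun l => g l = g j, |x l| ^ p) ^ (1 / p) := by
    rw [one_div, Real.le_rpow_inv_iff_of_pos (abs_nonneg _) (by positivity) hp]
    exact single_le_sum (f := fun l => |x l| ^ p) (fun l _ => by positivity) (by simp)
  exact (Real.rpow_le_rpow (abs_nonneg _) hj hq.le).trans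
    (single_le_sum
      (f := fun i => ((∑ l ∈ univ.filter fun l => g l = i, |x l| ^ p) ^ (1 / p)) ^ q)
      (fun i _ => by positivity) (mem_univ (g j)))

/-- The group `ℓ_{p,q}`-`ℓ_r` objective (`1 ≤ r < ∞`) attains a global minimum on `ℝ^N`. -/
theorem stmt_16 (N M G : ℕ) (g : Fin N → Fin G) (p q r α : ℝ)
    (hp : 1 ≤ p) (hq0 : 0 < q) (hq1 : q < 1) (hr : 1 ≤ r) (hα : 0 < α)
    (A : Matrix (Fin M) (Fin N) ℝ) (y : Fin M → ℝ) :
    ∃ xstar : Fin N → ℝ, ∀ x : Fin N → ℝ,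
      (∑ i : Fin G, ((∑ j ∈ univ.filter fun j => g j = i, |xstar j| ^ p) ^ (1 / p)) ^ q)
          + (1 / (r * α)) * ∑ k, |(A.mulVec xstar - y) k| ^ r
        ≤ (∑ i : Fin G, ((∑ j ∈ univ.filter fun j => g j = i, |x j| ^ p) ^ (1 / p)) ^ q)
          + (1 / (r * α)) * ∑ k, |(A.mulVec x - y) k| ^ r := by
  have hp0 : 0 < p := by linarith
  have hr0 : 0 < r := by linarith
  refine Continuous.exists_forall_le (f := fun x : Fin N → ℝ =>
    (∑ i : Fin G, ((∑ j ∈ univ.filter fun j => g j = i, |x j| ^ p) ^ (1 / p)) ^ q)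
      + (1 / (r * α)) * ∑ k, |(A.mulVec x - y) k| ^ r) ?_ ?_
  · refine .add (continuous_finsetSum _ fun i _ => ?_)
      (continuous_const.mul (continuous_finsetSum _ fun k _ => ?_))
    · refine .rpow_const (.rpow_const (continuous_finsetSum _ fun j _ => ?_)
        fun _ => .inr (by positivity)) fun _ => .inr hq0.le
      exact (continuous_apply j).abs.rpow_const fun _ => .inr hp0.le
    · refine .rpow_const (.abs ?_) fun _ => .inr hr0.le
      exact (continuous_apply k).comp
        ((continuous_const.matrix_mulVec continuous_id).sub continuous_const)
  · refine Filter.tendsto_atTop_mono (fun x => ?_)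
      ((tendsto_rpow_atTop hq0).comp (tendsto_norm_cocompact_atTop (E := Fin N → ℝ)))
    exact (norm_rpow_le_sum_group g hp0 hq0 x).trans
      (le_add_of_nonneg_right (by positivity))
end
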